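/- arXiv:math/0608649 — 2 statements merged into one kernel-verified Lean document; each statement's English description precedes it below -/
import Mathlib

section
/- Let p be an odd prime, let q ∈ ℚ_p satisfy |q - 1|_p < 1 with q ≠ 1, let m be a nonnegative integer, and let n be an even positive integer. Then q^n · lim_{N→∞} (1/[p^N]_{-q}) Σ_{x=0}^{p^N - 1} [x+n]_q^m (-q)^x − lim_{N→∞} (1/[p^N]_{-q}) Σ_{x=0}^{p^N - 1} [x]_q^m (-q)^x = (1+q) · Σ_{l=0}^{n-1} (-1)^{l-1} q^l [l]_q^m, both limits existing in ℚ_p. -/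
open Filter

/-!
For `|q - 1|_p < 1` and `p` odd one has `q ^ (p ^ N) → 1`, hence `(-q) ^ (p ^ N) → -1`, and no
power of `q` equals `-1`. Expanding `[x+n]_q ^ m` binomially turns each alternating sum into a
finite combination of geometric sums of ratio `-q ^ (j+1) ≠ 1` and length `p ^ N`, so both limits
exist. For even `n`, put `g x = [x]_q ^ m (-q) ^ x`; then `q ^ n` times the shifted sum minus the
unshifted one is `∑_{l < n} (g (p ^ N + l) - g l)`, which tends to `-2 ∑_{l < n} g l`, while the
normalising factor `1 / [p ^ N]_{-q}` tends to `(1 + q) / 2`.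
-/

/-- The principal unit `q` satisfies `q ^ (p ^ N) → 1`, since `p ∣ q - 1` in `ℤ_[p]` implies
`p ^ (N + 1) ∣ q ^ (p ^ N) - 1`. -/
lemma tendsto_pow_prime_pow (p : ℕ) [Fact p.Prime] (q : ℚ_[p]) (hq1 : ‖q - 1‖ < 1) :
    Tendsto (fun N : ℕ => q ^ (p ^ N)) atTop (nhds 1) := by
  have hp1 : (1 : ℝ) < p := by exact_mod_cast (Fact.out : p.Prime).one_lt
  set y : ℤ_[p] := ⟨q - 1, hq1.le⟩
  have hqy : q = ((1 + y : ℤ_[p]) : ℚ_[p]) := by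
    rw [PadicInt.coe_add, PadicInt.coe_one, show (y : ℚ_[p]) = q - 1 from rfl]; ring
  have hdvd : (p : ℤ_[p]) ∣ (1 + y) - 1 := by
    rw [add_sub_cancel_left]
    exact (PadicInt.norm_lt_one_iff_dvd y).1 (by rw [PadicInt.norm_def]; exact hq1)
  rw [tendsto_iff_norm_sub_tendsto_zero]
  have hlim : Tendsto (fun N : ℕ => ((p : ℝ)⁻¹) ^ N) atTop (nhds 0) :=
    tendsto_pow_atTop_nhds_zero_of_lt_one (by positivity) (inv_lt_one_of_one_lt₀ hp1)
  refine squeeze_zero (fun _ => norm_nonneg _) (fun N => ?_) hlim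
  have h := dvd_sub_pow_of_dvd_sub hdvd N
  have h2 : ((p : ℤ_[p]) ^ N) ∣ (1 + y) ^ p ^ N - 1 := by
    rw [one_pow] at h
    exact (pow_dvd_pow _ N.le_succ).trans h
  obtain ⟨c, hc⟩ := h2
  have h3 : q ^ (p ^ N) - 1 = (((1 + y) ^ p ^ N - 1 : ℤ_[p]) : ℚ_[p]) := by
    rw [hqy]; push_cast; ring
  rw [h3, hc, ← PadicInt.norm_def, norm_mul, norm_pow, PadicInt.norm_p]
  exact mul_le_of_le_one_right (by positivity) (PadicInt.norm_le_one c)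

/-- No power of `q` equals `-1`: otherwise `|q ^ k - 1|_p = |-2|_p = 1`. -/
lemma pow_ne_neg_one (p : ℕ) [Fact p.Prime] (hodd : Odd p) (q : ℚ_[p]) (hq1 : ‖q - 1‖ < 1)
    (k : ℕ) : q ^ k ≠ -1 := by
  intro hk
  have hq : ‖q‖ ≤ 1 := by
    have := Padic.nonarchimedean (q - 1) 1
    rw [sub_add_cancel, norm_one] at this
    exact this.trans (max_le hq1.le le_rfl)
  have hlt : ‖q ^ k - 1‖ < 1 := by
    rw [← mul_geom_sum q k, norm_mul]
    refine mul_lt_one_of_nonneg_of_lt_one_left (norm_nonneg _) hq1 ?_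
    refine IsUltrametricDist.norm_sum_le_of_forall_le_of_nonneg zero_le_one fun i _ => ?_
    rw [norm_pow]
    exact pow_le_one₀ (norm_nonneg _) hq
  have h2 : q ^ k - 1 = ((-2 : ℤ) : ℚ_[p]) := by rw [hk]; norm_num
  rw [h2, Padic.norm_intCast_lt_one_iff] at hlt
  have h4 : p ∣ 2 := by
    have := (dvd_neg (α := ℤ)).1 hlt
    exact_mod_cast this
  have h5 := (Nat.prime_dvd_prime_iff_eq Fact.out Nat.prime_two).1 h4
  subst h5
  exact absurd hodd (by decide)

/-- Existence of the limit of the unnormalised alternating sums. -/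
lemma exists_tendsto_sum (p : ℕ) [Fact p.Prime] (hodd : Odd p) (q : ℚ_[p]) (hq1 : ‖q - 1‖ < 1)
    (m n : ℕ) : ∃ L : ℚ_[p], Tendsto (fun N : ℕ =>
      ∑ x ∈ Finset.range (p ^ N), ((1 - q ^ (x + n)) / (1 - q)) ^ m * (-q) ^ x)
      atTop (nhds L) := by
  have hne : ∀ j : ℕ, -q ^ (j + 1) ≠ 1 := fun j h =>
    pow_ne_neg_one p hodd q hq1 (j + 1) (by rw [← h, neg_neg])
  have hexp : ∀ N : ℕ,
      ∑ x ∈ Finset.range (p ^ N), ((1 - q ^ (x + n)) / (1 - q)) ^ m * (-q) ^ x =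
      ∑ j ∈ Finset.range (m + 1), ((-q ^ n) ^ j * (m.choose j) / (1 - q) ^ m) *
        ((-(q ^ (p ^ N)) ^ (j + 1) - 1) / (-q ^ (j + 1) - 1)) := by
    intro N
    have hgeom : ∀ j : ℕ, (-(q ^ (p ^ N)) ^ (j + 1) - 1) / (-q ^ (j + 1) - 1) =
        ∑ x ∈ Finset.range (p ^ N), (-q ^ (j + 1)) ^ x := by
      intro j
      rw [geom_sum_eq (hne j), (hodd.pow (n := N)).neg_pow, ← pow_mul, ← pow_mul, mul_comm]
    simp_rw [hgeom, Finset.mul_sum]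
    rw [Finset.sum_comm]
    refine Finset.sum_congr rfl fun x _ => ?_
    rw [div_pow, show (1 : ℚ_[p]) - q ^ (x + n) = -q ^ (x + n) + 1 by ring, add_pow,
      Finset.sum_div, Finset.sum_mul]
    refine Finset.sum_congr rfl fun j _ => ?_
    have e : (-q ^ (x + n)) ^ j * (-q) ^ x = (-q ^ n) ^ j * (-q ^ (j + 1)) ^ x := by
      rw [show -q ^ (x + n) = (-q ^ n) * q ^ x by ring,
        show -q ^ (j + 1) = q ^ j * (-q) by ring, mul_pow, mul_pow, ← pow_mul, ← pow_mul,
        mul_comm x j]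
      ring
    rw [one_pow, mul_one]
    linear_combination ((m.choose j : ℚ_[p]) / (1 - q) ^ m) * e
  simp_rw [hexp]
  refine ⟨_, tendsto_finsetSum _ fun j _ => Tendsto.const_mul _ <| Tendsto.div_const
    (Tendsto.sub_const ((tendsto_pow_prime_pow p q hq1).pow (j + 1)).neg _) _⟩

/-- Let `p` be an odd prime, `q ∈ ℚ_p` with `|q-1|_p < 1`, `q ≠ 1`, `m : ℕ`,
and `n` an even positive integer. Then both `p`-adic `q`-integral limits exist, and
`q^n · I_{-q}([x+n]_q^m) - I_{-q}([x]_q^m) = (1+q) · Σ_{l=0}^{n-1} (-1)^{l-1} q^l [l]_q^m`. -/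
theorem stmt_14 (p : ℕ) [Fact p.Prime] (hodd : Odd p)
    (q : ℚ_[p]) (hq1 : ‖q - 1‖ < 1) (hq : q ≠ 1)
    (m n : ℕ) (hn : 0 < n) (hneven : Even n) :
    ∃ A B : ℚ_[p],
      Tendsto (fun N : ℕ =>
          (1 / ((1 - (-q) ^ (p ^ N)) / (1 + q))) *
            ∑ x ∈ Finset.range (p ^ N), ((1 - q ^ (x + n)) / (1 - q)) ^ m * (-q) ^ x)
        atTop (nhds A) ∧
      Tendsto (fun N : ℕ =>
          (1 / ((1 - (-q) ^ (p ^ N)) / (1 + q))) *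
            ∑ x ∈ Finset.range (p ^ N), ((1 - q ^ x) / (1 - q)) ^ m * (-q) ^ x)
        atTop (nhds B) ∧
      q ^ n * A - B =
        (1 + q) * ∑ l ∈ Finset.range n,
          (-1 : ℚ_[p]) ^ (l - 1 : ℤ) * q ^ l * ((1 - q ^ l) / (1 - q)) ^ m := by
  have hlim := tendsto_pow_prime_pow p q hq1
  have hneg : Tendsto (fun N : ℕ => (-q) ^ (p ^ N)) atTop (nhds (-1)) := by
    simpa only [(hodd.pow).neg_pow] using hlim.neg
  have h1q : 1 + q ≠ 0 := fun h => pow_ne_neg_one p hodd q hq1 1 (by linear_combination h)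
  have hfac : Tendsto (fun N : ℕ => 1 / ((1 - (-q) ^ (p ^ N)) / (1 + q))) atTop
      (nhds (1 / ((1 - (-1)) / (1 + q)))) := by
    refine Tendsto.div tendsto_const_nhds ((hneg.const_sub 1).div_const _) ?_
    exact div_ne_zero (by norm_num) h1q
  obtain ⟨L, hL⟩ := exists_tendsto_sum p hodd q hq1 m n
  obtain ⟨K, hK⟩ := exists_tendsto_sum p hodd q hq1 m 0
  simp only [add_zero] at hK
  refine ⟨_, _, hfac.mul hL, hfac.mul hK, ?_⟩
  set g : ℕ → ℚ_[p] := fun x => ((1 - q ^ x) / (1 - q)) ^ m * (-q) ^ x with hg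
  have hdiff : ∀ N : ℕ,
      q ^ n * ∑ x ∈ Finset.range (p ^ N), ((1 - q ^ (x + n)) / (1 - q)) ^ m * (-q) ^ x
        - ∑ x ∈ Finset.range (p ^ N), g x
      = ∑ l ∈ Finset.range n, (((1 - q ^ (p ^ N) * q ^ l) / (1 - q)) ^ m *
          ((-q) ^ (p ^ N) * (-q) ^ l) - g l) := by
    intro N
    have h1 : q ^ n * ∑ x ∈ Finset.range (p ^ N),
        ((1 - q ^ (x + n)) / (1 - q)) ^ m * (-q) ^ x
        = ∑ x ∈ Finset.range (p ^ N), g (n + x) := by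
      rw [Finset.mul_sum]
      refine Finset.sum_congr rfl fun x _ => ?_
      simp only [hg]
      rw [pow_add (-q) n x, hneven.neg_pow, add_comm n x]
      ring
    have h2 := Finset.sum_range_add g n (p ^ N)
    have h3 := Finset.sum_range_add g (p ^ N) n
    rw [add_comm] at h3
    rw [h1, Finset.sum_sub_distrib]
    simp_rw [← pow_add]
    linear_combination h3 - h2
  have hlim1 := (hL.const_mul (q ^ n)).sub hK
  simp_rw [hdiff] at hlim1
  have hlim2 : Tendsto (fun N : ℕ => ∑ l ∈ Finset.range n,
      (((1 - q ^ (p ^ N) * q ^ l) / (1 - q)) ^ m * ((-q) ^ (p ^ N) * (-q) ^ l) - g l)) atTop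
      (nhds (∑ l ∈ Finset.range n,
        (((1 - 1 * q ^ l) / (1 - q)) ^ m * (-1 * (-q) ^ l) - g l))) :=
    tendsto_finsetSum _ fun l _ =>
      (((((hlim.mul_const _).const_sub 1).div_const _).pow m).mul
        (hneg.mul_const _)).sub_const _
  have hkey := tendsto_nhds_unique hlim1 hlim2
  have hfinal : ∑ l ∈ Finset.range n,
        (((1 - 1 * q ^ l) / (1 - q)) ^ m * (-1 * (-q) ^ l) - g l)
      = 2 * ∑ l ∈ Finset.range n,
          (-1 : ℚ_[p]) ^ (l - 1 : ℤ) * q ^ l * ((1 - q ^ l) / (1 - q)) ^ m := by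
    rw [Finset.mul_sum]
    refine Finset.sum_congr rfl fun l _ => ?_
    simp only [hg]
    rw [zpow_sub₀ (by norm_num), zpow_natCast, zpow_one, neg_pow q l]
    ring
  rw [hfinal] at hkey
  have hc : (1 : ℚ_[p]) / ((1 - (-1)) / (1 + q)) = (1 + q) / 2 := by
    rw [one_div_div]; norm_num
  rw [hc]
  linear_combination ((1 + q) / 2) * hkey
end

section
/- Let p be an odd prime, let q ∈ ℚ_p satisfy |q - 1|_p < 1 with q ≠ 1, and define E_{n,q}(x) = (1+q) · (1/(1-q))^n · Σ_{l=0}^n C(n,l) (-1)^l q^{l·x} / (1 + q^{l+1}) for nonnegative integers n and x, and E_{n,q} = E_{n,q}(0). Then for every nonnegative integer m and every odd positive integer n: (1+q) · Σ_{l=0}^{n-1} (-1)^l q^l [l]_q^m = q^n E_{m,q}(n) + E_{m,q}. -/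
/-!
The `q`-Euler polynomials satisfy the difference equation
`q * E m (x + 1) + E m x = (1 + q) * [x]_q ^ m`: the combination on the left multiplies the `l`-th
summand by `1 + q ^ (l + 1)`, which cancels the denominator, and the binomial theorem sums what
remains to `(1 - q ^ x) ^ m`. Multiplying by `(-1) ^ x * q ^ x` and summing over `x < n` telescopes
to `E m 0 - (-1) ^ n * q ^ n * E m n`, which is the claim for odd `n`.

The denominators are nonzero because `q ^ k` is congruent to `1` modulo the maximal ideal,
whereas `-1` is not when `p` is odd.
-/

lemma norm_pow_sub_one_lt_one {p : ℕ} [Fact p.Prime] {q : ℚ_[p]} (hq1 : ‖q - 1‖ < 1) (k : ℕ) :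
    ‖q ^ k - 1‖ < 1 := by
  have hq : ‖q‖ ≤ 1 := by
    have h := Padic.nonarchimedean (q - 1) 1
    rw [sub_add_cancel, norm_one, max_eq_right hq1.le] at h
    exact h
  induction k with
  | zero => simp
  | succ k ih =>
    have h : q ^ (k + 1) - 1 = (q ^ k - 1) * q + (q - 1) := by ring
    rw [h]
    refine (Padic.nonarchimedean _ _).trans_lt (max_lt ?_ hq1)
    rw [norm_mul]
    exact (mul_le_of_le_one_right (norm_nonneg _) hq).trans_lt ih

lemma one_add_pow_ne_zero {p : ℕ} [Fact p.Prime] (hodd : Odd p) {q : ℚ_[p]}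
    (hq1 : ‖q - 1‖ < 1) (k : ℕ) : 1 + q ^ k ≠ 0 := by
  intro h
  have h1 := norm_pow_sub_one_lt_one hq1 k
  have h2 : q ^ k - 1 = -((2 : ℕ) : ℚ_[p]) := by
    push_cast
    linear_combination h
  rw [h2, norm_neg, Padic.norm_natCast_lt_one_iff] at h1
  rw [(Nat.prime_dvd_prime_iff_eq Fact.out Nat.prime_two).mp h1] at hodd
  exact absurd hodd (by decide)

/-- The difference equation `q * E m (x + 1) + E m x = (1 + q) * [x]_q ^ m`, with the common
factor `(1 + q) * (1 / (1 - q)) ^ m` removed. -/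
lemma qEuler_sum_step {K : Type*} [Field K] {q : K} (hne : ∀ k : ℕ, 1 + q ^ k ≠ 0) (m x : ℕ) :
    q * (∑ l ∈ Finset.range (m + 1),
        (m.choose l : K) * (-1) ^ l * q ^ (l * (x + 1)) / (1 + q ^ (l + 1))) +
      ∑ l ∈ Finset.range (m + 1), (m.choose l : K) * (-1) ^ l * q ^ (l * x) / (1 + q ^ (l + 1)) =
      (1 - q ^ x) ^ m := by
  have hbinom : (1 - q ^ x) ^ m = (-q ^ x + 1) ^ m := by ring
  rw [hbinom, add_pow, Finset.mul_sum, ← Finset.sum_add_distrib]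
  refine Finset.sum_congr rfl fun l _ => ?_
  have := hne (l + 1)
  rw [neg_pow, one_pow]
  field_simp
  ring

/-- Let `p` be an odd prime, `q ∈ ℚ_p` with `|q-1|_p < 1`, `q ≠ 1`, and define
`E_{n,q}(x) = (1+q) · (1/(1-q))^n · Σ_{l=0}^n C(n,l)(-1)^l q^{l·x}/(1+q^{l+1})` and
`E_{n,q} = E_{n,q}(0)`. Then for every `m : ℕ` and every odd positive integer `n`:
`(1+q) · Σ_{l=0}^{n-1} (-1)^l q^l [l]_q^m = q^n E_{m,q}(n) + E_{m,q}`. -/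
theorem stmt_15 (p : ℕ) [Fact p.Prime] (hodd : Odd p)
    (q : ℚ_[p]) (hq1 : ‖q - 1‖ < 1) (hq : q ≠ 1)
    (E : ℕ → ℕ → ℚ_[p])
    (hE : ∀ k x : ℕ, E k x = (1 + q) * (1 / (1 - q)) ^ k *
      ∑ l ∈ Finset.range (k + 1), (k.choose l : ℚ_[p]) * (-1) ^ l * q ^ (l * x) / (1 + q ^ (l + 1)))
    (m n : ℕ) (hn : 0 < n) (hnodd : Odd n) :
    (1 + q) * ∑ l ∈ Finset.range n, (-1 : ℚ_[p]) ^ l * q ^ l * ((1 - q ^ l) / (1 - q)) ^ m =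
      q ^ n * E m n + E m 0 := by
  have hstep : ∀ x : ℕ, q * E m (x + 1) + E m x = (1 + q) * ((1 - q ^ x) / (1 - q)) ^ m := by
    intro x
    have h := qEuler_sum_step (one_add_pow_ne_zero hodd hq1) m x
    rw [hE, hE, div_eq_mul_one_div (1 - q ^ x), mul_pow, ← h]
    ring
  have htelescope : ∀ k : ℕ,
      (1 + q) * ∑ l ∈ Finset.range k, (-1 : ℚ_[p]) ^ l * q ^ l * ((1 - q ^ l) / (1 - q)) ^ m =
        E m 0 - (-1) ^ k * q ^ k * E m k := by
    intro k
    induction k with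
    | zero => simp
    | succ k ih =>
      rw [Finset.sum_range_succ, mul_add, ih]
      linear_combination -((-1) ^ k * q ^ k) * hstep k
  rw [htelescope n, hnodd.neg_one_pow]
  ring
end
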